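/- arXiv:2202.10898 — 3 statements merged into one kernel-verified Lean document; each statement's English description precedes it below -/
import Mathlib

section
/- Let φ be an FOLe formula over the signature R and α an assignment that is total on the free variables of φ. Then for every FOLe interpretation I: I, α ⊨_FOLe φ if and only if ~I, α ⊨_FOL Ω_f(φ), where ~I is the decomposed classical first-order interpretation corresponding to I. Equivalently, since Ω_f is a bijection on formulas, for every classical first-order formula ψ over the decomposed signature ~R: I, α ⊨_FOLe Ω_f⁻¹(ψ) if and only if ~I, α ⊨_FOL ψ. -/
/-! ## Syntax of the relational calculus with null values (FOLe) -/

/-- A relational signature: relation symbols with arities, and constant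
symbols. -/
structure Signature where
  Rel : Type
  arity : Rel → ℕ
  Const : Type

/-- Null-free terms (used as arguments of equality atoms, which may not
mention the null symbol). -/
inductive NTerm (σ : Signature) (V : Type) where
  | const : σ.Const → NTerm σ V
  | var : V → NTerm σ V

/-- Terms of FOLe: constants, variables, and the null symbol `N`. -/
inductive Term (σ : Signature) (V : Type) where
  | const : σ.Const → Term σ V
  | var : V → Term σ V
  | null : Term σ V

/-- Formulas of FOLe: atoms `P(t₁,…,tₙ)`, equalities between non-null terms,
and closure under ¬, ∧, ∨, ∃, ∀ (together with the trivial conditions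
true/false). -/
inductive Formula (σ : Signature) (V : Type) where
  | tru : Formula σ V
  | fls : Formula σ V
  | atom : (P : σ.Rel) → (Fin (σ.arity P) → Term σ V) → Formula σ V
  | eq : NTerm σ V → NTerm σ V → Formula σ V
  | not : Formula σ V → Formula σ V
  | and : Formula σ V → Formula σ V → Formula σ V
  | or : Formula σ V → Formula σ V → Formula σ V
  | ex : V → Formula σ V → Formula σ V
  | all : V → Formula σ V → Formula σ V

/-! ## Semantics -/

/-- An FOLe interpretation: a nonempty domain, interpretations of the
constants, and for each `n`-ary relation symbol a set of *partial* `n`-tuples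
(partial functions `{1,…,n} → Δ`, encoded as `Fin n → Option Δ`). -/
structure Interp (σ : Signature) where
  Dom : Type
  nonempty : Nonempty Dom
  constInterp : σ.Const → Dom
  relInterp : (P : σ.Rel) → Set (Fin (σ.arity P) → Option Dom)

variable {σ : Signature} {V : Type}

/-- The (possibly undefined) value of a term under a partial assignment:
`N` and unassigned variables have undefined value. -/
def Term.val (I : Interp σ) (α : V → Option I.Dom) : Term σ V → Option I.Dom
  | .const c => some (I.constInterp c)
  | .var x => α x
  | .null => none

/-- The value of a null-free term. -/
def NTerm.val (I : Interp σ) (α : V → Option I.Dom) : NTerm σ V → Option I.Dom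
  | .const c => some (I.constInterp c)
  | .var x => α x

/-- FOLe satisfaction: an atom holds iff the partial tuple of the defined
term values belongs to the relation's interpretation; equality requires both
values defined and equal; connectives and quantifiers (over the domain) are
classical. -/
def Formula.Sat [DecidableEq V] (I : Interp σ) :
    (V → Option I.Dom) → Formula σ V → Prop
  | _, .tru => True
  | _, .fls => False
  | α, .atom P ts => (fun i => (ts i).val I α) ∈ I.relInterp P
  | α, .eq t₁ t₂ => ∃ d : I.Dom, t₁.val I α = some d ∧ t₂.val I α = some d
  | α, .not φ => ¬ Formula.Sat I α φ
  | α, .and φ ψ => Formula.Sat I α φ ∧ Formula.Sat I α ψ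
  | α, .or φ ψ => Formula.Sat I α φ ∨ Formula.Sat I α ψ
  | α, .ex x φ => ∃ d : I.Dom, Formula.Sat I (fun y => if y = x then some d else α y) φ
  | α, .all x φ => ∀ d : I.Dom, Formula.Sat I (fun y => if y = x then some d else α y) φ

/-! ## Free variables, safe range -/

/-- Variables of a term. -/
def Term.vars [DecidableEq V] : Term σ V → Finset V
  | .var x => {x}
  | _ => ∅

/-- Variables of a null-free term. -/
def NTerm.vars [DecidableEq V] : NTerm σ V → Finset V
  | .var x => {x}
  | _ => ∅

/-- Free variables of a formula. -/
def Formula.freeVars [DecidableEq V] : Formula σ V → Finset V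
  | .tru | .fls => ∅
  | .atom _ ts => Finset.univ.biUnion fun i => (ts i).vars
  | .eq t₁ t₂ => t₁.vars ∪ t₂.vars
  | .not φ => φ.freeVars
  | .and φ ψ | .or φ ψ => φ.freeVars ∪ ψ.freeVars
  | .ex x φ | .all x φ => φ.freeVars.erase x

/-- The range restriction of a formula (`none` = undefined), computed by the
standard syntactic rules. -/
def Formula.rr [DecidableEq V] : Formula σ V → Option (Finset V)
  | .tru | .fls => some ∅
  | .atom _ ts => some (Finset.univ.biUnion fun i => (ts i).vars)
  | .eq (.var x) (.const _) => some {x}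
  | .eq (.const _) (.var y) => some {y}
  | .eq _ _ => some ∅
  | .not φ => φ.rr.map fun _ => ∅
  | .and φ ψ => do pure ((← φ.rr) ∪ (← ψ.rr))
  | .or φ ψ => do pure ((← φ.rr) ∩ (← ψ.rr))
  | .ex x φ => φ.rr.bind fun s => if x ∈ s then some (s.erase x) else none
  | .all _ _ => none

/-- A formula is safe-range if its range restriction is defined and equals its
set of free variables. -/
def Formula.SafeRange [DecidableEq V] (φ : Formula σ V) : Prop :=
  φ.rr = some φ.freeVars

/-- A formula is null-free if the null symbol `N` does not occur in it. -/
def Term.NullFree : Term σ V → Prop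
  | .null => False
  | _ => True

def Formula.NullFree : Formula σ V → Prop
  | .atom _ ts => ∀ i, (ts i).NullFree
  | .not φ => φ.NullFree
  | .and φ ψ | .or φ ψ => φ.NullFree ∧ ψ.NullFree
  | .ex _ φ | .all _ φ => φ.NullFree
  | _ => True

/-! ## Classical first-order interpretations (total tuples) -/

/-- A classical first-order interpretation: each `n`-ary relation symbol is
interpreted as a set of *total* `n`-tuples. -/
structure CInterp (σ : Signature) where
  Dom : Type
  nonempty : Nonempty Dom
  constInterp : σ.Const → Dom
  relInterp : (P : σ.Rel) → Set (Fin (σ.arity P) → Dom)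

/-- Value of a term in a classical interpretation (under a possibly partial
assignment). -/
def CInterp.termVal {σ : Signature} {V : Type} (I : CInterp σ)
    (α : V → Option I.Dom) : Term σ V → Option I.Dom
  | .const c => some (I.constInterp c)
  | .var x => α x
  | .null => none

def CInterp.ntermVal {σ : Signature} {V : Type} (I : CInterp σ)
    (α : V → Option I.Dom) : NTerm σ V → Option I.Dom
  | .const c => some (I.constInterp c)
  | .var x => α x

/-- Classical first-order satisfaction: an atom `P(t₁,…,tₙ)` is satisfied iff
the tuple of the term values (all of which must be defined) belongs to the
interpretation of `P`; the rest is classical. -/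
def CInterp.Sat {σ : Signature} {V : Type} [DecidableEq V] (I : CInterp σ) :
    (V → Option I.Dom) → Formula σ V → Prop
  | _, .tru => True
  | _, .fls => False
  | α, .atom P ts => ∃ f ∈ I.relInterp P, ∀ i, I.termVal α (ts i) = some (f i)
  | α, .eq t₁ t₂ => ∃ d : I.Dom, I.ntermVal α t₁ = some d ∧ I.ntermVal α t₂ = some d
  | α, .not φ => ¬ CInterp.Sat I α φ
  | α, .and φ ψ => CInterp.Sat I α φ ∧ CInterp.Sat I α ψ
  | α, .or φ ψ => CInterp.Sat I α φ ∨ CInterp.Sat I α ψ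
  | α, .ex x φ => ∃ d : I.Dom, CInterp.Sat I (fun y => if y = x then some d else α y) φ
  | α, .all x φ => ∀ d : I.Dom, CInterp.Sat I (fun y => if y = x then some d else α y) φ

/-! ## The decomposed signature and the translation `Ω_f` -/

/-- The decomposed signature `~R`: for each relation symbol `P` of arity `n`
and each subset `A ⊆ {1,…,n}` of its positions, a predicate `~P_A` of arity
`|A|`; constants are unchanged. -/
def decompSig (σ : Signature) : Signature where
  Rel := Σ P : σ.Rel, Finset (Fin (σ.arity P))
  arity := fun PA => PA.2.card
  Const := σ.Const

/-- Transport of terms along the (identical) constants of the decomposed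
signature. -/
def Term.toD {σ : Signature} {V : Type} : Term σ V → Term (decompSig σ) V
  | .const c => .const c
  | .var x => .var x
  | .null => .null

def NTerm.toD {σ : Signature} {V : Type} : NTerm σ V → NTerm (decompSig σ) V
  | .const c => .const c
  | .var x => .var x

def Term.ofD {σ : Signature} {V : Type} : Term (decompSig σ) V → Term σ V
  | .const c => .const c
  | .var x => .var x
  | .null => .null

def NTerm.ofD {σ : Signature} {V : Type} : NTerm (decompSig σ) V → NTerm σ V
  | .const c => .const c
  | .var x => .var x

/-- Whether a term is the null symbol. -/
def Term.isNull {σ : Signature} {V : Type} : Term σ V → Bool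
  | .null => true
  | _ => false

/-- The decomposed classical interpretation `~I` of an FOLe interpretation
`I`: same domain and constants; `~P_A` is interpreted as the set of total
`|A|`-tuples listing, in ascending positional order, the values of those
partial tuples of `P^I` whose domain of definition is exactly `A`. -/
def decompInterp {σ : Signature} (I : Interp σ) : CInterp (decompSig σ) where
  Dom := I.Dom
  nonempty := I.nonempty
  constInterp := I.constInterp
  relInterp := fun PA =>
    { f | ∃ τ ∈ I.relInterp PA.1, (∀ j, τ j ≠ none ↔ j ∈ PA.2) ∧
        ∀ i, τ ↑(PA.2.orderIsoOfFin rfl i) = some (f i) }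

/-- The bijective translation `Ω_f` from FOLe formulas over `σ` to classical
formulas over the decomposed signature: an atom `P(t₁,…,tₙ)` is mapped to
`~P_A(t_{i₁},…,t_{i_k})` where `A = {i₁ < … < i_k}` is the set of positions
holding non-null terms; `Ω_f` is the identity on equality atoms and commutes
with the connectives and quantifiers. -/
def omegaF {σ : Signature} {V : Type} : Formula σ V → Formula (decompSig σ) V
  | .tru => .tru
  | .fls => .fls
  | .atom P ts =>
      let A : Finset (Fin (σ.arity P)) :=
        Finset.univ.filter fun j => (ts j).isNull = false
      .atom ⟨P, A⟩ (fun i => (ts ↑(A.orderIsoOfFin rfl i)).toD)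
  | .eq t₁ t₂ => .eq t₁.toD t₂.toD
  | .not φ => .not (omegaF φ)
  | .and φ ψ => .and (omegaF φ) (omegaF ψ)
  | .or φ ψ => .or (omegaF φ) (omegaF ψ)
  | .ex x φ => .ex x (omegaF φ)
  | .all x φ => .all x (omegaF φ)

/-- The inverse translation `Ω_f⁻¹`: an atom `~P_A(t_{i₁},…,t_{i_k})` is
mapped back to the `P`-atom holding the given terms at the positions of `A`
(in ascending order) and the null symbol elsewhere. -/
def omegaFInv {σ : Signature} {V : Type} : Formula (decompSig σ) V → Formula σ V
  | .tru => .tru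
  | .fls => .fls
  | .atom PA args =>
      .atom PA.1 (fun j =>
        if h : j ∈ PA.2 then (args ((PA.2.orderIsoOfFin rfl).symm ⟨j, h⟩)).ofD
        else .null)
  | .eq t₁ t₂ => .eq t₁.ofD t₂.ofD
  | .not φ => .not (omegaFInv φ)
  | .and φ ψ => .and (omegaFInv φ) (omegaFInv ψ)
  | .or φ ψ => .or (omegaFInv φ) (omegaFInv ψ)
  | .ex x φ => .ex x (omegaFInv φ)
  | .all x φ => .all x (omegaFInv φ)

/-! Once its domain of definition `A` is fixed, a partial tuple is the same thing as the total
`A`-tuple of its values. A term with assigned variables has an undefined value exactly when it is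
`N`, so the partial tuple denoted by an atom is defined exactly on the positions holding terms
other than `N`; this gives the atomic case, and the connectives and quantifiers are interpreted
alike on both sides. The converse translation is reduced to `Ω_f` through `Ω_f (Ω_f⁻¹ ψ) = ψ`,
valid for `ψ` free of `N`. -/

section PartialTuple

variable {ι D : Type*} [LinearOrder ι] {A : Finset ι} {τ τ' : ι → Option D} {k : ℕ}

theorem exists_eq_some_orderIsoOfFin (hk : A.card = k) (h : ∀ j ∈ A, τ j ≠ none) :
    ∃ f : Fin k → D, ∀ i, τ ↑(A.orderIsoOfFin hk i) = some (f i) := by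
  choose f hf using fun i : Fin k =>
    Option.ne_none_iff_exists'.mp (h _ (A.orderIsoOfFin hk i).2)
  exact ⟨f, hf⟩

theorem partialTuple_ext_orderIsoOfFin (hk : A.card = k)
    (hτ : ∀ j, τ j ≠ none → j ∈ A) (hτ' : ∀ j, τ' j ≠ none → j ∈ A)
    (h : ∀ i : Fin k, τ ↑(A.orderIsoOfFin hk i) = τ' ↑(A.orderIsoOfFin hk i)) :
    τ = τ' := by
  funext j
  by_cases hj : j ∈ A
  · simpa only [OrderIso.apply_symm_apply] using h ((A.orderIsoOfFin hk).symm ⟨j, hj⟩)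
  · rw [not_not.mp (mt (hτ j) hj), not_not.mp (mt (hτ' j) hj)]

end PartialTuple

theorem mem_relInterp_iff_exists_mem_decompInterp (I : Interp σ) {P : σ.Rel}
    {A : Finset (Fin (σ.arity P))} {τ : Fin (σ.arity P) → Option I.Dom}
    (hτ : ∀ j, τ j ≠ none ↔ j ∈ A) :
    τ ∈ I.relInterp P ↔ ∃ f ∈ (decompInterp I).relInterp ⟨P, A⟩,
      ∀ i, τ ↑(A.orderIsoOfFin rfl i) = some (f i) := by
  constructor
  · intro hmem
    obtain ⟨f, hf⟩ := exists_eq_some_orderIsoOfFin rfl fun j => (hτ j).mpr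
    exact ⟨f, ⟨τ, hmem, hτ, hf⟩, hf⟩
  · rintro ⟨f, ⟨τ', hmem, hτ', hf'⟩, hf⟩
    have hττ' : τ = τ' := partialTuple_ext_orderIsoOfFin rfl (fun j => (hτ j).mp)
      (fun j => (hτ' j).mp) fun i => (hf i).trans (hf' i).symm
    exact hττ' ▸ hmem

section TotalOn

variable {D : Type*} {α : V → Option D} {s t : Finset V}

/-- The partial assignment `α` is total on the set of variables `s`; the translation is correct for
assignments that are total on the free variables. -/
def TotalOn (α : V → Option D) (s : Finset V) : Prop :=
  ∀ x ∈ s, (α x).isSome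

theorem TotalOn.mono (h : TotalOn α t) (hst : s ⊆ t) : TotalOn α s :=
  fun x hx => h x (hst hx)

theorem TotalOn.update_of_erase [DecidableEq V] {x : V} (h : TotalOn α (s.erase x)) (d : D) :
    TotalOn (fun y => if y = x then some d else α y) s := by
  intro y hy
  by_cases hyx : y = x
  · simp [hyx]
  · simpa [hyx] using h y (Finset.mem_erase.mpr ⟨hyx, hy⟩)

end TotalOn

section Terms

variable (I : Interp σ) (α : V → Option I.Dom)

theorem Term.termVal_toD (t : Term σ V) : (decompInterp I).termVal α t.toD = t.val I α := by
  cases t <;> rfl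

theorem NTerm.ntermVal_toD (t : NTerm σ V) :
    (decompInterp I).ntermVal α t.toD = t.val I α := by
  cases t <;> rfl

theorem Term.toD_ofD (t : Term (decompSig σ) V) : t.ofD.toD = t := by
  cases t <;> rfl

theorem NTerm.toD_ofD (t : NTerm (decompSig σ) V) : t.ofD.toD = t := by
  cases t <;> rfl

theorem Term.isNull_ofD_eq_false_iff (t : Term (decompSig σ) V) :
    t.ofD.isNull = false ↔ t.NullFree := by
  cases t <;> simp [Term.ofD, Term.isNull, Term.NullFree]

theorem Term.vars_ofD [DecidableEq V] (t : Term (decompSig σ) V) : t.ofD.vars = t.vars := by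
  cases t <;> rfl

theorem NTerm.vars_ofD [DecidableEq V] (t : NTerm (decompSig σ) V) : t.ofD.vars = t.vars := by
  cases t <;> rfl

variable {I α} in
theorem Term.val_ne_none_iff [DecidableEq V] {t : Term σ V} (h : TotalOn α t.vars) :
    t.val I α ≠ none ↔ t.isNull = false := by
  cases t with
  | const c => simp [Term.val, Term.isNull]
  | null => simp [Term.val, Term.isNull]
  | var x =>
    have hx : (α x).isSome := h x (Finset.mem_singleton_self x)
    simpa [Term.val, Term.isNull, Option.isSome_iff_ne_none] using hx

end Terms

section Atoms

/-- The set `A` of positions of an argument list that hold a term other than `N`; it selects the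
predicate `~P_A` of the translated atom. -/
def nonNullPositions {n : ℕ} (ts : Fin n → Term σ V) : Finset (Fin n) :=
  Finset.univ.filter fun j => (ts j).isNull = false

/-- The atom `~P_A(t_{i₁},…,t_{i_k})` for an arbitrary `A = {i₁ < … < i_k}`. In
`omegaF (.atom P ts)` the set `A` is computed from `ts`, and the arity of the predicate depends on
it; keeping `A` as a parameter lets it be rewritten along an equality of sets. -/
def decompAtom (P : σ.Rel) (A : Finset (Fin (σ.arity P))) (ts : Fin (σ.arity P) → Term σ V) :
    Formula (decompSig σ) V :=
  .atom ⟨P, A⟩ fun i => (ts ↑(A.orderIsoOfFin rfl i)).toD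

/-- The argument list of the atom `Ω_f⁻¹(~P_A(args))`: the given terms at the positions of `A`, in
ascending order, and `N` elsewhere. -/
def padNull {n : ℕ} (A : Finset (Fin n)) (args : Fin A.card → Term (decompSig σ) V) :
    Fin n → Term σ V :=
  fun j => if h : j ∈ A then (args ((A.orderIsoOfFin rfl).symm ⟨j, h⟩)).ofD else .null

variable {n : ℕ} {A : Finset (Fin n)} {args : Fin A.card → Term (decompSig σ) V}

theorem padNull_of_mem {j : Fin n} (hj : j ∈ A) :
    padNull A args j = (args ((A.orderIsoOfFin rfl).symm ⟨j, hj⟩)).ofD :=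
  dif_pos hj

theorem padNull_of_notMem {j : Fin n} (hj : j ∉ A) : padNull A args j = .null :=
  dif_neg hj

theorem padNull_orderIsoOfFin (i : Fin A.card) :
    padNull A args ↑(A.orderIsoOfFin rfl i) = (args i).ofD := by
  rw [padNull_of_mem (A.orderIsoOfFin rfl i).2, Subtype.coe_eta, OrderIso.symm_apply_apply]

theorem nonNullPositions_padNull (hargs : ∀ i, (args i).NullFree) :
    nonNullPositions (padNull A args) = A := by
  ext j
  simp only [nonNullPositions, Finset.mem_filter_univ]
  by_cases hj : j ∈ A
  · simp only [padNull_of_mem hj, hj, iff_true]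
    exact (Term.isNull_ofD_eq_false_iff _).mpr (hargs _)
  · simp [padNull_of_notMem hj, hj, Term.isNull]

theorem biUnion_vars_padNull [DecidableEq V] :
    (Finset.univ.biUnion fun j => (padNull A args j).vars) =
      Finset.univ.biUnion fun i => (args i).vars := by
  ext x
  simp only [Finset.mem_biUnion, Finset.mem_univ, true_and]
  constructor
  · rintro ⟨j, hx⟩
    by_cases hj : j ∈ A
    · rw [padNull_of_mem hj, Term.vars_ofD] at hx
      exact ⟨_, hx⟩
    · simp [padNull_of_notMem hj, Term.vars] at hx
  · rintro ⟨i, hx⟩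
    refine ⟨A.orderIsoOfFin rfl i, ?_⟩
    rwa [padNull_orderIsoOfFin, Term.vars_ofD]

theorem decompAtom_padNull {P : σ.Rel} {A : Finset (Fin (σ.arity P))}
    (args : Fin A.card → Term (decompSig σ) V) :
    decompAtom P A (padNull A args) = .atom ⟨P, A⟩ args :=
  congrArg (Formula.atom (σ := decompSig σ) ⟨P, A⟩) <| funext fun i =>
    (congrArg Term.toD (padNull_orderIsoOfFin i)).trans (Term.toD_ofD _)

theorem sat_atom_iff_sat_decompAtom [DecidableEq V] {I : Interp σ} {α : V → Option I.Dom}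
    {P : σ.Rel} {ts : Fin (σ.arity P) → Term σ V} (hα : ∀ j, TotalOn α (ts j).vars) :
    Formula.Sat I α (.atom P ts) ↔
      (decompInterp I).Sat α (decompAtom P (nonNullPositions ts) ts) := by
  have hdom (j) : (ts j).val I α ≠ none ↔ j ∈ nonNullPositions ts := by
    rw [Term.val_ne_none_iff (hα j), nonNullPositions, Finset.mem_filter_univ]
  refine (mem_relInterp_iff_exists_mem_decompInterp I hdom).trans ?_
  exact exists_congr fun f => and_congr_right' <| forall_congr' fun i =>
    (Eq.congr_left (Term.termVal_toD I α _)).symm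

end Atoms

theorem freeVars_omegaFInv [DecidableEq V] (ψ : Formula (decompSig σ) V) :
    (omegaFInv ψ).freeVars = ψ.freeVars := by
  induction ψ with
  | tru | fls => rfl
  | atom PA args => exact biUnion_vars_padNull
  | eq t₁ t₂ => simp only [omegaFInv, Formula.freeVars, NTerm.vars_ofD]
  | not _ ih => exact ih
  | and φ ψ ihφ ihψ | or φ ψ ihφ ihψ => simp only [omegaFInv, Formula.freeVars, ihφ, ihψ]
  | ex x φ ih | all x φ ih => simp only [omegaFInv, Formula.freeVars, ih]

theorem omegaF_omegaFInv {ψ : Formula (decompSig σ) V} (hψ : ψ.NullFree) :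
    omegaF (omegaFInv ψ) = ψ := by
  induction ψ with
  | tru | fls => rfl
  | atom PA args =>
    obtain ⟨P, A⟩ := PA
    calc omegaF (omegaFInv (.atom ⟨P, A⟩ args))
        = decompAtom P (nonNullPositions (padNull A args)) (padNull A args) := rfl
      _ = decompAtom P A (padNull A args) := by rw [nonNullPositions_padNull hψ]
      _ = .atom ⟨P, A⟩ args := decompAtom_padNull args
  | eq t₁ t₂ => simp only [omegaFInv, omegaF, NTerm.toD_ofD]
  | not φ ih => exact congrArg Formula.not (ih hψ)
  | and φ ψ ihφ ihψ => exact congrArg₂ Formula.and (ihφ hψ.1) (ihψ hψ.2)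
  | or φ ψ ihφ ihψ => exact congrArg₂ Formula.or (ihφ hψ.1) (ihψ hψ.2)
  | ex x φ ih => exact congrArg (Formula.ex x) (ih hψ)
  | all x φ ih => exact congrArg (Formula.all x) (ih hψ)

theorem sat_iff_sat_omegaF [DecidableEq V] {I : Interp σ} {φ : Formula σ V}
    {α : V → Option I.Dom} (hα : TotalOn α φ.freeVars) :
    Formula.Sat I α φ ↔ (decompInterp I).Sat α (omegaF φ) := by
  induction φ generalizing α with
  | tru | fls => exact Iff.rfl
  | atom P ts =>
    exact sat_atom_iff_sat_decompAtom fun j =>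
      hα.mono (Finset.subset_biUnion_of_mem (fun j => (ts j).vars) (Finset.mem_univ j))
  | eq t₁ t₂ => simp only [Formula.Sat, omegaF, CInterp.Sat, NTerm.ntermVal_toD]; exact Iff.rfl
  | not φ ih => exact not_congr (ih hα)
  | and φ ψ ihφ ihψ =>
    exact and_congr (ihφ (hα.mono Finset.subset_union_left))
      (ihψ (hα.mono Finset.subset_union_right))
  | or φ ψ ihφ ihψ =>
    exact or_congr (ihφ (hα.mono Finset.subset_union_left))
      (ihψ (hα.mono Finset.subset_union_right))
  | ex x φ ih => exact exists_congr fun d => ih (hα.update_of_erase d)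
  | all x φ ih => exact forall_congr' fun d => ih (hα.update_of_erase d)

theorem sat_omegaFInv_iff_sat [DecidableEq V] {I : Interp σ} {ψ : Formula (decompSig σ) V}
    {α : V → Option I.Dom} (hψ : ψ.NullFree) (hα : TotalOn α ψ.freeVars) :
    Formula.Sat I α (omegaFInv ψ) ↔ (decompInterp I).Sat α ψ := by
  rw [← freeVars_omegaFInv] at hα
  rw [sat_iff_sat_omegaF hα, omegaF_omegaFInv hψ]

/-- Correctness of the translation `Ω_f`: for every FOLe formula `φ` and every
assignment `α` total on the free variables of `φ`, `I, α ⊨_FOLe φ` iff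
`~I, α ⊨_FOL Ω_f(φ)`; and conversely, for every (null-free) classical formula
`ψ` over the decomposed signature and every assignment total on its free
variables, `I, α ⊨_FOLe Ω_f⁻¹(ψ)` iff `~I, α ⊨_FOL ψ`. -/
theorem omegaF_correct {σ : Signature} {V : Type} [DecidableEq V]
    (I : Interp σ) :
    (∀ (φ : Formula σ V) (α : V → Option I.Dom),
      (∀ x ∈ φ.freeVars, (α x).isSome) →
      (Formula.Sat I α φ ↔ CInterp.Sat (decompInterp I) α (omegaF φ))) ∧
    (∀ (ψ : Formula (decompSig σ) V) (α : V → Option I.Dom),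
      ψ.NullFree →
      (∀ x ∈ ψ.freeVars, (α x).isSome) →
      (Formula.Sat I α (omegaFInv ψ) ↔ CInterp.Sat (decompInterp I) α ψ)) := by
  constructor
  · exact fun _ _ => sat_iff_sat_omegaF
  · exact fun _ _ => sat_omegaFInv_iff_sat
end

section
/- Every safe-range closed FOLe formula is domain independent, and conversely every domain independent closed FOLe formula is logically equivalent to a safe-range closed FOLe formula. -/
variable {σ : Signature} {V : Type}

/-! ## Set-based FOLe interpretations (domains as subsets of an ambient type,
so that interpretations over different domains can share their relation and
constant interpretations) -/

structure SInterp (σ : Signature) (U : Type) where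
  Dom : Set U
  nonempty : Dom.Nonempty
  constInterp : σ.Const → U
  const_mem : ∀ c, constInterp c ∈ Dom
  relInterp : (P : σ.Rel) → Set (Fin (σ.arity P) → Option U)
  rel_mem : ∀ P τ, τ ∈ relInterp P → ∀ i d, τ i = some d → d ∈ Dom

/-- Value of a term (partial: `N` and unassigned variables are undefined). -/
def SInterp.termVal {σ : Signature} {V U : Type} (I : SInterp σ U)
    (α : V → Option U) : Term σ V → Option U
  | .const c => some (I.constInterp c)
  | .var x => α x
  | .null => none

def SInterp.ntermVal {σ : Signature} {V U : Type} (I : SInterp σ U)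
    (α : V → Option U) : NTerm σ V → Option U
  | .const c => some (I.constInterp c)
  | .var x => α x

/-- FOLe satisfaction, with quantifiers ranging over the domain of the
interpretation. -/
def SInterp.Sat {σ : Signature} {V U : Type} [DecidableEq V] (I : SInterp σ U) :
    (V → Option U) → Formula σ V → Prop
  | _, .tru => True
  | _, .fls => False
  | α, .atom P ts => (fun i => I.termVal α (ts i)) ∈ I.relInterp P
  | α, .eq t₁ t₂ => ∃ d : U, I.ntermVal α t₁ = some d ∧ I.ntermVal α t₂ = some d
  | α, .not φ => ¬ SInterp.Sat I α φ
  | α, .and φ ψ => SInterp.Sat I α φ ∧ SInterp.Sat I α ψ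
  | α, .or φ ψ => SInterp.Sat I α φ ∨ SInterp.Sat I α ψ
  | α, .ex x φ => ∃ d ∈ I.Dom, SInterp.Sat I (fun y => if y = x then some d else α y) φ
  | α, .all x φ => ∀ d ∈ I.Dom, SInterp.Sat I (fun y => if y = x then some d else α y) φ

/-- A closed FOLe formula is domain independent if any two interpretations
that agree on the interpretation of all relation symbols and constant symbols,
but have possibly different domains, agree on its truth value. -/
def DomIndep {σ : Signature} {V : Type} [DecidableEq V] (φ : Formula σ V) : Prop :=
  ∀ (U : Type) (I J : SInterp σ U),
    I.constInterp = J.constInterp → I.relInterp = J.relInterp →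
    (SInterp.Sat I (fun _ => none) φ ↔ SInterp.Sat J (fun _ => none) φ)

/-!
A safe-range formula can only be satisfied by assigning to its range-restricted variables elements
of the active domain, the set of elements mentioned by the symbols of the formula. So quantifiers
of a safe-range formula may as well range over the active domain, whatever the domain is.

Conversely, a domain independent formula may be evaluated over the active domain together with a
single fresh element, which occurs in no relation and is equal only to itself. Whether a variable
denotes the fresh element can be recorded in the syntax, hence `∃ x, φ` becomes the disjunction of
`φ` with `x` marked as fresh and of the formulas `∃ x, t ∧ φ`, where `t` runs through finitely many
safe-range formulas which together define the active domain. Distributing the disjunction over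
`∃ x` is essential: an empty disjunction is `fls`, which does not range-restrict `x`.
-/

section FOLe

variable {U W : Type}

/-! ### Symbols and active domain -/

/-- The non-logical symbols of a signature: relation symbols and constant symbols. -/
abbrev Signature.Symbol (σ : Signature) : Type := σ.Rel ⊕ σ.Const

/-- The constant symbols occurring in a term. -/
def Term.symbols : Term σ V → List σ.Symbol
  | .const c => [.inr c]
  | _ => []

/-- The inclusion of null-free terms into terms. -/
def NTerm.toTerm : NTerm σ V → Term σ V
  | .const c => .const c
  | .var x => .var x

/-- The non-logical symbols occurring in a formula. -/
def Formula.symbols : Formula σ V → List σ.Symbol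
  | .tru | .fls => []
  | .atom P ts => .inl P :: (List.finRange (σ.arity P)).flatMap fun i => (ts i).symbols
  | .eq t₁ t₂ => t₁.toTerm.symbols ++ t₂.toTerm.symbols
  | .not φ | .ex _ φ | .all _ φ => φ.symbols
  | .and φ ψ | .or φ ψ => φ.symbols ++ ψ.symbols

theorem Formula.symbols_subset_symbols_atom (P : σ.Rel) (ts : Fin (σ.arity P) → Term σ V)
    (i : Fin (σ.arity P)) : (ts i).symbols ⊆ (Formula.atom P ts).symbols := fun _ hs =>
  List.mem_cons_of_mem _ (List.mem_flatMap.2 ⟨i, List.mem_finRange i, hs⟩)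

namespace SInterp

/-- The domain elements mentioned by the interpretation of a symbol. -/
def elements (I : SInterp σ U) : σ.Symbol → Set U
  | .inl P => {d | ∃ τ ∈ I.relInterp P, ∃ i, τ i = some d}
  | .inr c => {I.constInterp c}

/-- The active domain of an interpretation with respect to finitely many symbols. -/
def activeDomain (I : SInterp σ U) (S : List σ.Symbol) : Set U :=
  {d | ∃ s ∈ S, d ∈ I.elements s}

theorem activeDomain_mono (I : SInterp σ U) {S T : List σ.Symbol} (h : S ⊆ T) :
    I.activeDomain S ⊆ I.activeDomain T := fun _ ⟨s, hs, hd⟩ => ⟨s, h hs, hd⟩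

theorem activeDomain_subset_dom (I : SInterp σ U) (S : List σ.Symbol) :
    I.activeDomain S ⊆ I.Dom := by
  rintro d ⟨P | c, -, hd⟩
  · obtain ⟨τ, hτ, i, hi⟩ := hd
    exact I.rel_mem P τ hτ i d hi
  · exact hd ▸ I.const_mem c

/-- Two interpretations, possibly over different domains, agree on the given symbols. -/
structure AgreeOn (S : List σ.Symbol) (I J : SInterp σ U) : Prop where
  const_eq : ∀ c, .inr c ∈ S → I.constInterp c = J.constInterp c
  rel_eq : ∀ P, .inl P ∈ S → I.relInterp P = J.relInterp P

namespace AgreeOn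

variable {S T : List σ.Symbol} {I J : SInterp σ U}

theorem mono (h : AgreeOn T I J) (hST : S ⊆ T) : AgreeOn S I J :=
  ⟨fun c hc => h.const_eq c (hST hc), fun P hP => h.rel_eq P (hST hP)⟩

theorem symm (h : AgreeOn S I J) : AgreeOn S J I :=
  ⟨fun c hc => (h.const_eq c hc).symm, fun P hP => (h.rel_eq P hP).symm⟩

theorem trans {K : SInterp σ U} (h : AgreeOn S I J) (h' : AgreeOn S J K) : AgreeOn S I K :=
  ⟨fun c hc => (h.const_eq c hc).trans (h'.const_eq c hc),
    fun P hP => (h.rel_eq P hP).trans (h'.rel_eq P hP)⟩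

theorem activeDomain_eq (h : AgreeOn S I J) : I.activeDomain S = J.activeDomain S := by
  ext d
  refine exists_congr fun s => and_congr_right fun hs => ?_
  cases s with
  | inl P => simp only [elements, h.rel_eq P hs]
  | inr c => simp only [elements, h.const_eq c hs]

end AgreeOn

/-! ### Satisfaction depends only on the domain and the symbols of the formula -/

theorem ntermVal_eq_termVal (I : SInterp σ U) (α : V → Option U) (t : NTerm σ V) :
    I.ntermVal α t = I.termVal α t.toTerm := by
  cases t <;> rfl

theorem AgreeOn.termVal_eq {S : List σ.Symbol} {I J : SInterp σ U} (h : AgreeOn S I J)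
    (α : V → Option U) {t : Term σ V} (ht : t.symbols ⊆ S) : I.termVal α t = J.termVal α t := by
  cases t with
  | const c => exact congrArg some (h.const_eq c (ht (List.mem_singleton_self _)))
  | var x => rfl
  | null => rfl

variable [DecidableEq V] {I J : SInterp σ U} {α : V → Option U}

theorem sat_ex {x : V} {φ : Formula σ V} :
    I.Sat α (.ex x φ) ↔ ∃ d ∈ I.Dom, I.Sat (Function.update α x (some d)) φ := by
  simp only [Sat, funext (Function.update_apply α x _)]

theorem sat_all {x : V} {φ : Formula σ V} :
    I.Sat α (.all x φ) ↔ ∀ d ∈ I.Dom, I.Sat (Function.update α x (some d)) φ := by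
  simp only [Sat, funext (Function.update_apply α x _)]

theorem sat_eq {t₁ t₂ : NTerm σ V} :
    I.Sat α (.eq t₁ t₂) ↔ ∃ d, I.termVal α t₁.toTerm = some d ∧ I.termVal α t₂.toTerm = some d := by
  simp only [Sat, ntermVal_eq_termVal]

theorem sat_atom_congr {P : σ.Rel} {ts : Fin (σ.arity P) → Term σ V}
    (h : AgreeOn (Formula.atom P ts).symbols I J) (α : V → Option U) :
    I.Sat α (.atom P ts) ↔ J.Sat α (.atom P ts) := by
  simp only [Sat, h.rel_eq P List.mem_cons_self,
    fun i => h.termVal_eq α (Formula.symbols_subset_symbols_atom P ts i)]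

theorem sat_eq_congr {t₁ t₂ : NTerm σ V} (h : AgreeOn (Formula.eq t₁ t₂).symbols I J)
    (α : V → Option U) : I.Sat α (.eq t₁ t₂) ↔ J.Sat α (.eq t₁ t₂) := by
  simp only [sat_eq, h.termVal_eq α (List.subset_append_left _ _),
    h.termVal_eq α (List.subset_append_right _ _)]

theorem sat_congr {φ : Formula σ V} (h : AgreeOn φ.symbols I J) (hDom : I.Dom = J.Dom)
    (α : V → Option U) : I.Sat α φ ↔ J.Sat α φ := by
  induction φ generalizing α with
  | tru | fls => rfl
  | atom P ts => exact sat_atom_congr h α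
  | eq t₁ t₂ => exact sat_eq_congr h α
  | not φ ih => exact not_congr (ih h α)
  | and φ ψ ihφ ihψ =>
    exact and_congr (ihφ (h.mono (List.subset_append_left _ _)) α)
      (ihψ (h.mono (List.subset_append_right _ _)) α)
  | or φ ψ ihφ ihψ =>
    exact or_congr (ihφ (h.mono (List.subset_append_left _ _)) α)
      (ihψ (h.mono (List.subset_append_right _ _)) α)
  | ex x φ ih => simp only [sat_ex, hDom, ih h]
  | all x φ ih => simp only [sat_all, hDom, ih h]

end SInterp

/-! ### Range restriction -/

namespace Formula

variable [DecidableEq V] {φ ψ : Formula σ V} {s : Finset V}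

theorem rr_not_eq_some : φ.not.rr = some s ↔ φ.rr.isSome ∧ s = ∅ := by
  simp [rr, Option.isSome_iff_exists, @eq_comm _ s]

theorem rr_and_eq_some :
    (φ.and ψ).rr = some s ↔ ∃ s₁ s₂, φ.rr = some s₁ ∧ ψ.rr = some s₂ ∧ s₁ ∪ s₂ = s := by
  simp [rr, Option.bind_eq_some_iff]

theorem rr_or_eq_some :
    (φ.or ψ).rr = some s ↔ ∃ s₁ s₂, φ.rr = some s₁ ∧ ψ.rr = some s₂ ∧ s₁ ∩ s₂ = s := by
  simp [rr, Option.bind_eq_some_iff]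

theorem rr_ex_eq_some {x : V} :
    (φ.ex x).rr = some s ↔ ∃ t, φ.rr = some t ∧ x ∈ t ∧ t.erase x = s := by
  simp [rr, Option.bind_eq_some_iff]

theorem isSome_rr_not : φ.not.rr.isSome ↔ φ.rr.isSome := by
  simp [Option.isSome_iff_exists, rr_not_eq_some]

theorem isSome_rr_and : (φ.and ψ).rr.isSome ↔ φ.rr.isSome ∧ ψ.rr.isSome := by
  simp [Option.isSome_iff_exists, rr_and_eq_some]

theorem isSome_rr_or : (φ.or ψ).rr.isSome ↔ φ.rr.isSome ∧ ψ.rr.isSome := by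
  simp [Option.isSome_iff_exists, rr_or_eq_some]

theorem isSome_rr_eq (t₁ t₂ : NTerm σ V) : (Formula.eq t₁ t₂).rr.isSome := by
  cases t₁ <;> cases t₂ <;> rfl

theorem rr_subset_freeVars (h : φ.rr = some s) : s ⊆ φ.freeVars := by
  induction φ generalizing s with
  | tru | fls | atom => exact (Option.some.inj h).ge
  | eq t₁ t₂ =>
    cases t₁ <;> cases t₂ <;> cases h <;> simp [freeVars, NTerm.vars]
  | not φ => simp [(rr_not_eq_some.1 h).2]
  | and φ ψ ihφ ihψ =>
    obtain ⟨s₁, s₂, h₁, h₂, rfl⟩ := rr_and_eq_some.1 h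
    exact Finset.union_subset_union (ihφ h₁) (ihψ h₂)
  | or φ ψ ihφ =>
    obtain ⟨s₁, s₂, h₁, -, rfl⟩ := rr_or_eq_some.1 h
    exact Finset.inter_subset_left.trans ((ihφ h₁).trans Finset.subset_union_left)
  | ex x φ ih =>
    obtain ⟨t, ht, -, rfl⟩ := rr_ex_eq_some.1 h
    exact Finset.erase_subset_erase x (ih ht)
  | all x φ => simp [rr] at h

theorem SafeRange.of_closed (hfv : φ.freeVars = ∅) (hrr : φ.rr.isSome) : φ.SafeRange := by
  obtain ⟨s, hs⟩ := Option.isSome_iff_exists.1 hrr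
  have : s = ∅ := Finset.subset_empty.1 (hfv ▸ rr_subset_freeVars hs)
  rw [SafeRange, hs, hfv, this]

end Formula

namespace SInterp

variable [DecidableEq V] {I J : SInterp σ U} {α : V → Option U} {s : Finset V} {x : V} {d : U}

theorem mem_activeDomain_of_sat_atom {P : σ.Rel} {ts : Fin (σ.arity P) → Term σ V}
    (hsat : I.Sat α (.atom P ts)) (hx : x ∈ (Formula.atom P ts).freeVars) (hd : α x = some d) :
    d ∈ I.activeDomain (Formula.atom P ts).symbols := by
  obtain ⟨i, -, hi⟩ := Finset.mem_biUnion.1 hx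
  refine ⟨.inl P, List.mem_cons_self, _, hsat, i, ?_⟩
  cases ht : ts i with
  | var y =>
    obtain rfl : x = y := by simpa [ht, Term.vars] using hi
    exact hd
  | const c => simp [ht, Term.vars] at hi
  | null => simp [ht, Term.vars] at hi

theorem mem_activeDomain_of_sat_eq {t₁ t₂ : NTerm σ V} (hsat : I.Sat α (.eq t₁ t₂))
    (hs : (Formula.eq t₁ t₂).rr = some s) (hx : x ∈ s) (hd : α x = some d) :
    d ∈ I.activeDomain (Formula.eq t₁ t₂).symbols := by
  obtain ⟨e, h₁, h₂⟩ := hsat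
  cases t₁ <;> cases t₂ <;> cases hs <;> simp_all [ntermVal, activeDomain, elements,
    Formula.symbols, NTerm.toTerm, Term.symbols]

theorem mem_activeDomain_of_sat {φ : Formula σ V} (hsat : I.Sat α φ) (hs : φ.rr = some s)
    (hx : x ∈ s) (hd : α x = some d) : d ∈ I.activeDomain φ.symbols := by
  induction φ generalizing s α with
  | tru | fls => cases hs; simp at hx
  | atom P ts => cases hs; exact mem_activeDomain_of_sat_atom hsat hx hd
  | eq t₁ t₂ => exact mem_activeDomain_of_sat_eq hsat hs hx hd
  | not φ => simp [(Formula.rr_not_eq_some.1 hs).2] at hx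
  | and φ ψ ihφ ihψ =>
    obtain ⟨s₁, s₂, h₁, h₂, rfl⟩ := Formula.rr_and_eq_some.1 hs
    rcases Finset.mem_union.1 hx with hx | hx
    · exact I.activeDomain_mono (List.subset_append_left _ _) (ihφ hsat.1 h₁ hx hd)
    · exact I.activeDomain_mono (List.subset_append_right _ _) (ihψ hsat.2 h₂ hx hd)
  | or φ ψ ihφ ihψ =>
    obtain ⟨s₁, s₂, h₁, h₂, rfl⟩ := Formula.rr_or_eq_some.1 hs
    obtain ⟨hx₁, hx₂⟩ := Finset.mem_inter.1 hx
    rcases hsat with hφ | hψ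
    · exact I.activeDomain_mono (List.subset_append_left _ _) (ihφ hφ h₁ hx₁ hd)
    · exact I.activeDomain_mono (List.subset_append_right _ _) (ihψ hψ h₂ hx₂ hd)
  | ex y φ ih =>
    obtain ⟨t, ht, -, rfl⟩ := Formula.rr_ex_eq_some.1 hs
    obtain ⟨e, -, hφ⟩ := sat_ex.1 hsat
    obtain ⟨hxy, hxt⟩ := Finset.mem_erase.1 hx
    exact ih hφ ht hxt ((Function.update_of_ne hxy _ _).trans hd)
  | all y φ => simp [Formula.rr] at hs

theorem sat_congr_of_isSome_rr {φ : Formula σ V} (hφ : φ.rr.isSome) (h : AgreeOn φ.symbols I J)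
    (α : V → Option U) : I.Sat α φ ↔ J.Sat α φ := by
  induction φ generalizing α with
  | tru | fls => rfl
  | atom P ts => exact sat_atom_congr h α
  | eq t₁ t₂ => exact sat_eq_congr h α
  | not φ ih => exact not_congr (ih (Formula.isSome_rr_not.1 hφ) h α)
  | and φ ψ ihφ ihψ =>
    obtain ⟨hφ, hψ⟩ := Formula.isSome_rr_and.1 hφ
    exact and_congr (ihφ hφ (h.mono (List.subset_append_left _ _)) α)
      (ihψ hψ (h.mono (List.subset_append_right _ _)) α)
  | or φ ψ ihφ ihψ =>
    obtain ⟨hφ, hψ⟩ := Formula.isSome_rr_or.1 hφ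
    exact or_congr (ihφ hφ (h.mono (List.subset_append_left _ _)) α)
      (ihψ hψ (h.mono (List.subset_append_right _ _)) α)
  | ex x φ ih =>
    obtain ⟨s, hs⟩ := Option.isSome_iff_exists.1 hφ
    obtain ⟨t, ht, hx, -⟩ := Formula.rr_ex_eq_some.1 hs
    have hmem (K : SInterp σ U) (d : U) (hK : K.Sat (Function.update α x (some d)) φ) :
        d ∈ K.activeDomain φ.symbols :=
      mem_activeDomain_of_sat hK ht hx (Function.update_self ..)
    have hJ : I.activeDomain φ.symbols ⊆ J.Dom :=
      h.activeDomain_eq ▸ J.activeDomain_subset_dom _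
    have hI : J.activeDomain φ.symbols ⊆ I.Dom :=
      h.activeDomain_eq ▸ I.activeDomain_subset_dom _
    have ih := ih (Option.isSome_of_eq_some ht) h
    rw [sat_ex, sat_ex]
    exact exists_congr fun d =>
      ⟨fun ⟨_, hd⟩ => ⟨hJ (hmem I d hd), (ih _).1 hd⟩,
        fun ⟨_, hd⟩ => ⟨hI (hmem J d hd), (ih _).2 hd⟩⟩
  | all x φ => simp [Formula.rr] at hφ

end SInterp

theorem Formula.SafeRange.domIndep [DecidableEq V] {φ : Formula σ V} (h : φ.SafeRange) :
    DomIndep φ := fun _ _ _ hc hr =>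
  SInterp.sat_congr_of_isSome_rr (Option.isSome_of_eq_some h)
    ⟨fun c _ => congrFun hc c, fun P _ => congrFun hr P⟩ _

/-! ### Changing the domain of an interpretation -/

namespace SInterp

open Classical in
/-- The interpretation with domain `D` that agrees with `I` on the symbols in `S`; all other
relation symbols are empty and all other constant symbols denote `a`. -/
noncomputable def restrict (I : SInterp σ U) {S : List σ.Symbol} {D : Set U}
    (hD : I.activeDomain S ⊆ D) {a : U} (ha : a ∈ D) : SInterp σ U where
  Dom := D
  nonempty := ⟨a, ha⟩
  constInterp c := if .inr c ∈ S then I.constInterp c else a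
  const_mem c := by
    split_ifs with hc
    · exact hD ⟨.inr c, hc, rfl⟩
    · exact ha
  relInterp P := if .inl P ∈ S then I.relInterp P else ∅
  rel_mem P τ hτ i d hd := by
    split_ifs at hτ with hP
    · exact hD ⟨.inl P, hP, τ, hτ, i, hd⟩
    · exact hτ.elim

theorem agreeOn_restrict (I : SInterp σ U) {S : List σ.Symbol} {D : Set U}
    (hD : I.activeDomain S ⊆ D) {a : U} (ha : a ∈ D) : AgreeOn S I (I.restrict hD ha) :=
  ⟨fun _ hc => (if_pos hc).symm, fun _ hP => (if_pos hP).symm⟩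

/-- The isomorphic copy of an interpretation along an injection of the ambient types. -/
def map (f : U ↪ W) (I : SInterp σ U) : SInterp σ W where
  Dom := f '' I.Dom
  nonempty := I.nonempty.image f
  constInterp c := f (I.constInterp c)
  const_mem c := Set.mem_image_of_mem f (I.const_mem c)
  relInterp P := (fun τ => Option.map f ∘ τ) '' I.relInterp P
  rel_mem := by
    rintro P _ ⟨τ, hτ, rfl⟩ i d hd
    obtain ⟨e, he, rfl⟩ := Option.map_eq_some_iff.1 hd
    exact Set.mem_image_of_mem f (I.rel_mem P τ hτ i e he)

theorem map_comp_mem_relInterp_map {f : U ↪ W} {I : SInterp σ U} {P : σ.Rel}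
    {τ : Fin (σ.arity P) → Option U} :
    Option.map f ∘ τ ∈ (I.map f).relInterp P ↔ τ ∈ I.relInterp P :=
  (Option.map_injective f.injective).comp_left.mem_set_image

theorem termVal_map (f : U ↪ W) (I : SInterp σ U) (α : V → Option U) (t : Term σ V) :
    (I.map f).termVal (Option.map f ∘ α) t = (I.termVal α t).map f := by
  cases t <;> rfl

theorem activeDomain_map (f : U ↪ W) (I : SInterp σ U) (S : List σ.Symbol) :
    (I.map f).activeDomain S = f '' I.activeDomain S := by
  have helements (s : σ.Symbol) : (I.map f).elements s = f '' I.elements s := by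
    cases s with
    | inl P =>
      ext d
      constructor
      · rintro ⟨_, ⟨τ, hτ, rfl⟩, i, hi⟩
        obtain ⟨e, he, rfl⟩ := Option.map_eq_some_iff.1 hi
        exact ⟨e, ⟨τ, hτ, i, he⟩, rfl⟩
      · rintro ⟨e, ⟨τ, hτ, i, he⟩, rfl⟩
        exact ⟨_, ⟨τ, hτ, rfl⟩, i, congrArg (Option.map f) he⟩
    | inr c => exact (Set.image_singleton (f := f) (a := I.constInterp c)).symm
  ext d
  simp only [activeDomain, helements, Set.mem_ofPred_eq, Set.mem_image]
  tauto

variable [DecidableEq V]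

theorem sat_map (f : U ↪ W) (I : SInterp σ U) (α : V → Option U) (φ : Formula σ V) :
    (I.map f).Sat (Option.map f ∘ α) φ ↔ I.Sat α φ := by
  induction φ generalizing α with
  | tru | fls => rfl
  | atom P ts =>
    simp only [Sat, termVal_map]
    exact map_comp_mem_relInterp_map
  | eq t₁ t₂ =>
    simp only [sat_eq, termVal_map, Option.map_eq_some_iff]
    grind [f.injective.eq_iff]
  | not φ ih => exact not_congr (ih α)
  | and φ ψ ihφ ihψ => exact and_congr (ihφ α) (ihψ α)
  | or φ ψ ihφ ihψ => exact or_congr (ihφ α) (ihψ α)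
  | ex x φ ih =>
    simp only [sat_ex, ← ih, Function.comp_update]
    exact Set.exists_mem_image
  | all x φ ih =>
    simp only [sat_all, ← ih, Function.comp_update]
    exact Set.forall_mem_image

end SInterp

theorem DomIndep.sat_congr [DecidableEq V] {φ : Formula σ V} (hφ : DomIndep φ)
    {I J : SInterp σ U} (h : SInterp.AgreeOn φ.symbols I J) :
    I.Sat (fun _ => none) φ ↔ J.Sat (fun _ => none) φ := by
  obtain ⟨a, ha⟩ := I.nonempty
  obtain ⟨b, hb⟩ := J.nonempty
  have hI := I.activeDomain_subset_dom φ.symbols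
  have hJ : I.activeDomain φ.symbols ⊆ J.Dom := h.activeDomain_eq ▸ J.activeDomain_subset_dom _
  have hIJ : I.activeDomain φ.symbols ⊆ I.Dom ∪ J.Dom := hI.trans Set.subset_union_left
  have ha' : a ∈ I.Dom ∪ J.Dom := Or.inl ha
  have hb' : b ∈ I.Dom ∪ J.Dom := Or.inr hb
  calc I.Sat (fun _ => none) φ
    _ ↔ (I.restrict hI ha).Sat (fun _ => none) φ :=
      SInterp.sat_congr (I.agreeOn_restrict hI ha) rfl _
    _ ↔ (I.restrict hIJ ha').Sat (fun _ => none) φ := hφ _ _ _ rfl rfl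
    _ ↔ (I.restrict hIJ hb').Sat (fun _ => none) φ :=
      SInterp.sat_congr
        ((I.agreeOn_restrict hIJ ha').symm.trans (I.agreeOn_restrict hIJ hb')) rfl _
    _ ↔ (I.restrict hJ hb).Sat (fun _ => none) φ := hφ _ _ _ rfl rfl
    _ ↔ J.Sat (fun _ => none) φ :=
      SInterp.sat_congr ((I.agreeOn_restrict hJ hb).symm.trans h) rfl _

/-! ### Quantification over the active domain -/

namespace Formula

/-- The disjunction of a list of formulas. -/
def disj (l : List (Formula σ V)) : Formula σ V := l.foldr .or .fls

/-- The existential quantification of a formula over a list of variables. -/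
def exs (l : List V) (φ : Formula σ V) : Formula σ V := l.foldr .ex φ

variable [DecidableEq V]

theorem isSome_rr_disj {l : List (Formula σ V)} (h : ∀ φ ∈ l, φ.rr.isSome) :
    (disj l).rr.isSome := by
  induction l with
  | nil => rfl
  | cons φ l ih =>
    rw [List.forall_mem_cons] at h
    exact isSome_rr_or.2 ⟨h.1, ih h.2⟩

theorem freeVars_disj_subset {l : List (Formula σ V)} {s : Finset V}
    (h : ∀ φ ∈ l, φ.freeVars ⊆ s) : (disj l).freeVars ⊆ s := by
  induction l with
  | nil => exact Finset.empty_subset s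
  | cons φ l ih =>
    rw [List.forall_mem_cons] at h
    exact Finset.union_subset h.1 (ih h.2)

theorem rr_exs {φ : Formula σ V} {s : Finset V} (hφ : φ.rr = some s) {l : List V} (hl : l.Nodup)
    (hs : ∀ y ∈ l, y ∈ s) : (exs l φ).rr = some (s \ l.toFinset) := by
  induction l with
  | nil => simpa [exs] using hφ
  | cons y l ih =>
    rw [List.nodup_cons] at hl
    rw [List.forall_mem_cons] at hs
    refine rr_ex_eq_some.2 ⟨_, ih hl.2 hs.2, by simp [hs.1, hl.1], ?_⟩
    rw [List.toFinset_cons, Finset.sdiff_insert]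

theorem freeVars_exs (l : List V) (φ : Formula σ V) :
    (exs l φ).freeVars = φ.freeVars \ l.toFinset := by
  induction l with
  | nil => simp [exs]
  | cons y l ih =>
    rw [List.toFinset_cons, Finset.sdiff_insert, ← ih]
    rfl

end Formula

namespace SInterp

variable [DecidableEq V] {I : SInterp σ U} {α : V → Option U}

theorem sat_disj {l : List (Formula σ V)} : I.Sat α (.disj l) ↔ ∃ φ ∈ l, I.Sat α φ := by
  induction l with
  | nil => simp [Formula.disj, Sat]
  | cons φ l ih => rw [List.exists_mem_cons_iff, ← ih]; rfl

theorem sat_exs {l : List V} {φ : Formula σ V} :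
    I.Sat α (.exs l φ) ↔ ∃ β : V → Option U, (∀ y ∉ l, β y = α y) ∧
      (∀ y ∈ l, ∃ d ∈ I.Dom, β y = some d) ∧ I.Sat β φ := by
  induction l generalizing α with
  | nil =>
    refine ⟨fun h => ⟨α, by simp, by simp, h⟩, ?_⟩
    rintro ⟨β, hβ, -, h⟩
    rwa [funext fun y => hβ y List.not_mem_nil] at h
  | cons x l ih =>
    change I.Sat α (.ex x (.exs l φ)) ↔ _
    simp only [sat_ex, ih]
    constructor
    · rintro ⟨d, hd, β, hout, hin, h⟩
      refine ⟨β, fun y hy => ?_, fun y hy => ?_, h⟩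
      · rw [List.mem_cons, not_or] at hy
        rw [hout y hy.2, Function.update_of_ne hy.1]
      · by_cases hyl : y ∈ l
        · exact hin y hyl
        · obtain rfl : y = x := (List.mem_cons.1 hy).resolve_right hyl
          exact ⟨d, hd, by rw [hout y hyl, Function.update_self]⟩
    · rintro ⟨β, hout, hin, h⟩
      obtain ⟨d, hd, hx⟩ := hin x List.mem_cons_self
      refine ⟨d, hd, β, fun y hy => ?_, fun y hy => hin y (List.mem_cons_of_mem x hy), h⟩
      by_cases hyx : y = x
      · rw [hyx, hx, Function.update_self]
      · rw [Function.update_of_ne hyx, hout y (by simp [hyx, hy])]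

end SInterp

/-- The atom `P(t₁,…,tₙ)` in which `tⱼ` is the variable `v j` for `j ∈ s` and the null symbol
otherwise. -/
def Formula.patternAtom (P : σ.Rel) (v : Fin (σ.arity P) ↪ V) (s : Finset (Fin (σ.arity P))) :
    Formula σ V :=
  .atom P fun j => if j ∈ s then .var (v j) else .null

theorem Formula.freeVars_patternAtom [DecidableEq V] (P : σ.Rel) (v : Fin (σ.arity P) ↪ V)
    (s : Finset (Fin (σ.arity P))) : (patternAtom P v s).freeVars = s.map v := by
  ext y
  simp only [patternAtom, freeVars, Finset.mem_biUnion, Finset.mem_univ, true_and, Finset.mem_map]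
  refine exists_congr fun j => ?_
  split_ifs with hj <;> simp [Term.vars, hj, eq_comm]

section Sources

variable [DecidableEq V] [Infinite V]

/-- An injective family of variables whose `i`-th member is `x`. -/
noncomputable def argVars {n : ℕ} (x : V) (i : Fin n) : Fin n ↪ V :=
  (Fin.valEmbedding.trans (Infinite.natEmbedding V)).trans
    (Equiv.swap (Infinite.natEmbedding V i) x).toEmbedding

theorem argVars_self {n : ℕ} (x : V) (i : Fin n) : argVars x i i = x :=
  Equiv.swap_apply_left _ _

namespace Formula

/-- The formula stating that `x` is the `i`-th component of a partial tuple in `P` which is defined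
exactly on `s`. -/
noncomputable def occurrence (x : V) (P : σ.Rel) (i : Fin (σ.arity P))
    (s : Finset (Fin (σ.arity P))) : Formula σ V :=
  exs ((s.map (argVars x i)).erase x).toList (patternAtom P (argVars x i) s)

/-- Formulas in the free variable `x` whose disjunction says that `x` is one of the elements
mentioned by the given symbol. -/
noncomputable def sources (x : V) : σ.Symbol → List (Formula σ V)
  | .inl P =>
    (Finset.univ.filter fun p : Fin (σ.arity P) × Finset (Fin (σ.arity P)) => p.1 ∈ p.2).toList.map
      fun p => occurrence x P p.1 p.2
  | .inr c => [.eq (.var x) (.const c)]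

theorem freeVars_occurrence {x : V} {P : σ.Rel} {i : Fin (σ.arity P)}
    {s : Finset (Fin (σ.arity P))} (hi : i ∈ s) : (occurrence x P i s).freeVars = {x} := by
  have hx : x ∈ s.map (argVars x i) := Finset.mem_map.2 ⟨i, hi, argVars_self x i⟩
  rw [occurrence, freeVars_exs, freeVars_patternAtom, Finset.toList_toFinset,
    Finset.sdiff_erase_self hx]

theorem safeRange_occurrence (x : V) (P : σ.Rel) (i : Fin (σ.arity P))
    (s : Finset (Fin (σ.arity P))) : (occurrence x P i s).SafeRange := by
  rw [SafeRange, occurrence, freeVars_exs]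
  refine rr_exs rfl (Finset.nodup_toList _) fun y hy => ?_
  rw [← freeVars_patternAtom, Finset.mem_toList] at hy
  exact Finset.mem_of_mem_erase hy

theorem freeVars_and_rr_of_mem_sources {x : V} {s : σ.Symbol} {t : Formula σ V}
    (ht : t ∈ sources x s) : t.freeVars = {x} ∧ t.rr = some {x} := by
  cases s with
  | inl P =>
    obtain ⟨p, hp, rfl⟩ := List.mem_map.1 ht
    have hp : p.1 ∈ p.2 := by simpa using hp
    have hfv := freeVars_occurrence (x := x) hp
    exact ⟨hfv, hfv ▸ safeRange_occurrence x P p.1 p.2⟩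
  | inr c =>
    obtain rfl := List.mem_singleton.1 ht
    exact ⟨rfl, rfl⟩

/-- The formula expressing `∃ x, φ` with `x` ranging over the active domain. -/
noncomputable def exActive (S : List σ.Symbol) (x : V) (φ : Formula σ V) : Formula σ V :=
  disj ((S.flatMap (sources x)).map fun t => .ex x (.and t φ))

theorem isSome_rr_exActive (S : List σ.Symbol) (x : V) {φ : Formula σ V} (hφ : φ.rr.isSome) :
    (exActive S x φ).rr.isSome := by
  refine isSome_rr_disj (List.forall_mem_map.2 fun t ht => ?_)
  obtain ⟨s, -, hts⟩ := List.mem_flatMap.1 ht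
  obtain ⟨r, hr⟩ := Option.isSome_iff_exists.1 hφ
  have hand : (t.and φ).rr = some ({x} ∪ r) :=
    rr_and_eq_some.2 ⟨_, _, (freeVars_and_rr_of_mem_sources hts).2, hr, rfl⟩
  exact Option.isSome_of_eq_some (rr_ex_eq_some.2 ⟨_, hand, by simp, rfl⟩)

theorem freeVars_exActive_subset (S : List σ.Symbol) (x : V) (φ : Formula σ V) :
    (exActive S x φ).freeVars ⊆ φ.freeVars.erase x := by
  refine freeVars_disj_subset (List.forall_mem_map.2 fun t ht => ?_)
  obtain ⟨s, -, hts⟩ := List.mem_flatMap.1 ht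
  simp [freeVars, (freeVars_and_rr_of_mem_sources hts).1]

end Formula

namespace SInterp

variable {I : SInterp σ U} {α : V → Option U} {x : V} {d : U}

theorem exists_mem_relInterp_of_sat_occurrence {P : σ.Rel} {i : Fin (σ.arity P)}
    {s : Finset (Fin (σ.arity P))} (hi : i ∈ s) (hα : α x = some d)
    (h : I.Sat α (.occurrence x P i s)) : ∃ τ ∈ I.relInterp P, τ i = some d := by
  obtain ⟨β, hout, -, hβ⟩ := sat_exs.1 h
  have hx : β x = some d := (hout x (by simp)).trans hα
  exact ⟨_, hβ, by simp [hi, termVal, argVars_self, hx]⟩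

theorem sat_occurrence_of_mem_relInterp {P : σ.Rel} {τ : Fin (σ.arity P) → Option U}
    (hτ : τ ∈ I.relInterp P) {i : Fin (σ.arity P)} (hi : τ i = some d) (hα : α x = some d) :
    I.Sat α (.occurrence x P i {j | (τ j).isSome}) := by
  set v := argVars x i
  set s : Finset (Fin (σ.arity P)) := {j | (τ j).isSome}
  let β : V → Option U := fun y => if y ∈ (s.map v).erase x then Function.extend v τ α y else α y
  have hβ {j} (hj : j ∈ s) : β (v j) = τ j := by
    obtain rfl | hji := eq_or_ne j i
    · have : v j = x := argVars_self x j
      simp [β, this, hα, hi]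
    · have : v j ≠ x := fun h => hji (v.injective (h.trans (argVars_self x i).symm))
      simp [β, this, hj, v.injective.extend_apply]
  refine sat_exs.2 ⟨β, fun y hy => if_neg (by simpa using hy), fun y hy => ?_, ?_⟩
  · obtain ⟨j, hj, rfl⟩ := Finset.mem_map.1 (Finset.mem_of_mem_erase (Finset.mem_toList.1 hy))
    obtain ⟨e, he⟩ := Option.isSome_iff_exists.1 (Finset.mem_filter.1 hj).2
    exact ⟨e, I.rel_mem P τ hτ j e he, (hβ hj).trans he⟩
  · simp only [Formula.patternAtom, Sat]
    convert hτ with j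
    split_ifs with hj
    · exact hβ hj
    · have : τ j = none := by simpa [s] using hj
      exact this.symm

theorem exists_mem_sources_sat_iff (hα : α x = some d) (s : σ.Symbol) :
    (∃ t ∈ Formula.sources x s, I.Sat α t) ↔ d ∈ I.elements s := by
  cases s with
  | inl P =>
    simp only [Formula.sources, List.mem_map, exists_exists_and_eq_and, Finset.mem_toList,
      Finset.mem_filter_univ]
    constructor
    · rintro ⟨p, hi, h⟩
      obtain ⟨τ, hτ, hd⟩ := exists_mem_relInterp_of_sat_occurrence hi hα h
      exact ⟨τ, hτ, p.1, hd⟩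
    · rintro ⟨τ, hτ, i, hi⟩
      exact ⟨⟨i, ({j | (τ j).isSome} : Finset _)⟩, by simp [hi],
        sat_occurrence_of_mem_relInterp hτ hi hα⟩
  | inr c => simp [Formula.sources, Sat, ntermVal, hα, elements, eq_comm]

theorem sat_exActive {S : List σ.Symbol} {φ : Formula σ V} :
    I.Sat α (.exActive S x φ) ↔
      ∃ d ∈ I.activeDomain S, I.Sat (Function.update α x (some d)) φ := by
  have hsources (d : U) : (∃ t ∈ S.flatMap (Formula.sources x),
      I.Sat (Function.update α x (some d)) t) ↔ d ∈ I.activeDomain S := by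
    simp only [List.mem_flatMap, activeDomain, Set.mem_ofPred_eq,
      ← exists_mem_sources_sat_iff (Function.update_self x (some d) α)]
    tauto
  have hex (t : Formula σ V) : I.Sat α (.ex x (.and t φ)) ↔ ∃ d ∈ I.Dom,
      I.Sat (Function.update α x (some d)) t ∧ I.Sat (Function.update α x (some d)) φ := sat_ex
  simp only [Formula.exActive, sat_disj, List.mem_map, exists_exists_and_eq_and, hex, ← hsources]
  constructor
  · rintro ⟨t, ht, d, -, hdt, hφ⟩
    exact ⟨d, ⟨t, ht, hdt⟩, hφ⟩
  · rintro ⟨d, ⟨t, ht, hdt⟩, hφ⟩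
    exact ⟨t, ht, d, I.activeDomain_subset_dom S ((hsources d).1 ⟨t, ht, hdt⟩), hdt, hφ⟩

end SInterp

end Sources

/-! ### Relativization to the active domain and a fresh element -/

/-- What is known about the value of a variable during relativization: it is the value of the same
variable in the relativized formula (`kept`), or the fresh element (`fresh`), or undefined
(`undef`). -/
inductive VarRole where
  | kept
  | fresh
  | undef
  deriving DecidableEq

/-- The value of a variable or term of the given role over the domain extended by the fresh element
`none`, where `a` is its value over the original domain. -/
def VarRole.value (a : Option U) : VarRole → Option (Option U)
  | .kept => a.map some
  | .fresh => some none
  | .undef => none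

/-- The role of a term, given the roles of the variables. -/
def Term.role (ρ : V → VarRole) : Term σ V → VarRole
  | .const _ => .kept
  | .var x => ρ x
  | .null => .undef

theorem Term.eq_kept_of_mem_vars [DecidableEq V] {ρ : V → VarRole} {t : Term σ V}
    (ht : t.role ρ = .kept) {x : V} (hx : x ∈ t.vars) : ρ x = .kept := by
  cases t with
  | var y =>
    obtain rfl := Finset.mem_singleton.1 hx
    exact ht
  | const c => simp [Term.vars] at hx
  | null => simp [Term.vars] at hx

theorem NTerm.vars_toTerm [DecidableEq V] (t : NTerm σ V) : t.toTerm.vars = t.vars := by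
  cases t <;> rfl

/-- The assignment over the extended domain described by the roles of the variables and their
values over the original domain. -/
def VarRole.extend (ρ : V → VarRole) (α : V → Option U) : V → Option (Option U) :=
  fun x => (ρ x).value (α x)

theorem VarRole.extend_update [DecidableEq V] (ρ : V → VarRole) (α : V → Option U) (x : V)
    (r : VarRole) (a : Option U) : extend (Function.update ρ x r) (Function.update α x a) =
      Function.update (extend ρ α) x (r.value a) := by
  ext1 y
  obtain rfl | hy := eq_or_ne y x <;> simp [extend, *]

theorem VarRole.extend_update_fresh [DecidableEq V] (ρ : V → VarRole) (α : V → Option U) (x : V) :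
    extend (Function.update ρ x .fresh) α = Function.update (extend ρ α) x (some none) := by
  have h := extend_update ρ α x .fresh (α x)
  rwa [Function.update_eq_self] at h

theorem SInterp.termVal_extend (I : SInterp σ U) (ρ : V → VarRole) (α : V → Option U)
    (t : Term σ V) : (I.map .some).termVal (VarRole.extend ρ α) t =
      (t.role ρ).value (I.termVal α t) := by
  cases t <;> rfl

section Relativize

variable [DecidableEq V] [Infinite V]

namespace Formula

/-- The formula expressing that `φ` holds over the active domain of the symbols in `S` extended by
one fresh element, when the roles of the variables are given by `ρ`. -/
noncomputable def relativize (S : List σ.Symbol) (ρ : V → VarRole) :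
    Formula σ V → Formula σ V
  | .tru => .tru
  | .fls => .fls
  | .atom P ts =>
    if ∃ i, (ts i).role ρ = .fresh then .fls
    else .atom P fun i => if (ts i).role ρ = .kept then ts i else .null
  | .eq t₁ t₂ =>
    match t₁.toTerm.role ρ, t₂.toTerm.role ρ with
    | .kept, .kept => .eq t₁ t₂
    | .fresh, .fresh => .tru
    | _, _ => .fls
  | .not φ => .not (φ.relativize S ρ)
  | .and φ ψ => .and (φ.relativize S ρ) (ψ.relativize S ρ)
  | .or φ ψ => .or (φ.relativize S ρ) (ψ.relativize S ρ)
  | .ex x φ =>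
    .or (exActive S x (φ.relativize S (Function.update ρ x .kept)))
      (φ.relativize S (Function.update ρ x .fresh))
  | .all x φ =>
    .and (.not (exActive S x (.not (φ.relativize S (Function.update ρ x .kept)))))
      (φ.relativize S (Function.update ρ x .fresh))

theorem isSome_rr_relativize (S : List σ.Symbol) (ρ : V → VarRole) (φ : Formula σ V) :
    (φ.relativize S ρ).rr.isSome := by
  induction φ generalizing ρ with
  | tru | fls => rfl
  | atom P ts => unfold relativize; split_ifs <;> rfl
  | eq t₁ t₂ =>
    unfold relativize
    split
    · exact isSome_rr_eq t₁ t₂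
    · rfl
    · rfl
  | not φ ih => exact isSome_rr_not.2 (ih ρ)
  | and φ ψ ihφ ihψ => exact isSome_rr_and.2 ⟨ihφ ρ, ihψ ρ⟩
  | or φ ψ ihφ ihψ => exact isSome_rr_or.2 ⟨ihφ ρ, ihψ ρ⟩
  | ex x φ ih => exact isSome_rr_or.2 ⟨isSome_rr_exActive S x (ih _), ih _⟩
  | all x φ ih =>
    exact isSome_rr_and.2 ⟨isSome_rr_not.2 (isSome_rr_exActive S x (isSome_rr_not.2 (ih _))), ih _⟩

theorem eq_kept_of_mem_freeVars_relativize {S : List σ.Symbol} {ρ : V → VarRole}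
    {φ : Formula σ V} {y : V} (hy : y ∈ (φ.relativize S ρ).freeVars) : ρ y = .kept := by
  have hquant {ρ : V → VarRole} {x : V} {s t : Finset V}
      (hs : y ∈ s → Function.update ρ x .kept y = .kept)
      (ht : y ∈ t → Function.update ρ x .fresh y = .kept) (h : y ∈ s.erase x ∪ t) :
      ρ y = .kept := by
    obtain rfl | hyx := eq_or_ne y x
    · simpa using ht (by simpa using h)
    · rw [Function.update_of_ne hyx] at hs ht
      exact (Finset.mem_union.1 h).elim (hs ∘ Finset.mem_of_mem_erase) ht
  induction φ generalizing ρ with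
  | tru | fls => simp [relativize, freeVars] at hy
  | atom P ts =>
    unfold relativize at hy
    split_ifs at hy
    · simp [freeVars] at hy
    · obtain ⟨i, -, hi⟩ := Finset.mem_biUnion.1 hy
      beta_reduce at hi
      split_ifs at hi with hrole
      · exact Term.eq_kept_of_mem_vars hrole hi
      · simp [Term.vars] at hi
  | eq t₁ t₂ =>
    unfold relativize at hy
    split at hy
    next h₁ h₂ =>
      simp only [freeVars, Finset.mem_union, ← NTerm.vars_toTerm] at hy
      exact hy.elim (Term.eq_kept_of_mem_vars h₁) (Term.eq_kept_of_mem_vars h₂)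
    all_goals simp [freeVars] at hy
  | not φ ih => exact ih hy
  | and φ ψ ihφ ihψ | or φ ψ ihφ ihψ => exact (Finset.mem_union.1 hy).elim ihφ ihψ
  | ex x φ ih =>
    exact hquant ih ih (Finset.union_subset_union_left (freeVars_exActive_subset S x _) hy)
  | all x φ ih =>
    exact hquant ih ih (Finset.union_subset_union_left (freeVars_exActive_subset S x (.not _)) hy)

end Formula

namespace SInterp

variable {I : SInterp σ U} {S : List σ.Symbol} {ρ : V → VarRole} {α : V → Option U}

theorem sat_relativize_atom {P : σ.Rel} {ts : Fin (σ.arity P) → Term σ V} :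
    I.Sat α ((Formula.atom P ts).relativize S ρ) ↔
      (I.map .some).Sat (VarRole.extend ρ α) (.atom P ts) := by
  simp only [Formula.relativize, Sat, termVal_extend]
  split_ifs with hfresh
  · obtain ⟨i, hi⟩ := hfresh
    refine iff_of_false id ?_
    rintro ⟨τ, -, hτ⟩
    have := congrFun hτ i
    simp [hi, VarRole.value] at this
  · refine (map_comp_mem_relInterp_map (f := .some)).symm.trans ?_
    refine iff_of_eq (congrArg (· ∈ (I.map .some).relInterp P) (funext fun i => ?_))
    cases hi : (ts i).role ρ with
    | kept => simp [hi, VarRole.value]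
    | fresh => exact (hfresh ⟨i, hi⟩).elim
    | undef => simp [hi, VarRole.value, termVal]

theorem sat_relativize_eq {t₁ t₂ : NTerm σ V} :
    I.Sat α ((Formula.eq t₁ t₂).relativize S ρ) ↔
      (I.map .some).Sat (VarRole.extend ρ α) (.eq t₁ t₂) := by
  rw [sat_eq]
  simp only [Formula.relativize, termVal_extend]
  cases t₁.toTerm.role ρ <;> cases t₂.toTerm.role ρ <;>
    simp [VarRole.value, Sat, ntermVal_eq_termVal]

theorem sat_relativize {J : SInterp σ (Option U)}
    (hJ : J.Dom = insert none (some '' I.activeDomain S)) {φ : Formula σ V} (hφ : φ.symbols ⊆ S)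
    (h : AgreeOn S (I.map .some) J) :
    I.Sat α (φ.relativize S ρ) ↔ J.Sat (VarRole.extend ρ α) φ := by
  induction φ generalizing ρ α with
  | tru | fls => rfl
  | atom P ts => exact sat_relativize_atom.trans (sat_atom_congr (h.mono hφ) _)
  | eq t₁ t₂ => exact sat_relativize_eq.trans (sat_eq_congr (h.mono hφ) _)
  | not φ ih => exact not_congr (ih hφ)
  | and φ ψ ihφ ihψ =>
    obtain ⟨hφ, hψ⟩ := List.append_subset.1 hφ
    exact and_congr (ihφ hφ) (ihψ hψ)
  | or φ ψ ihφ ihψ =>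
    obtain ⟨hφ, hψ⟩ := List.append_subset.1 hφ
    exact or_congr (ihφ hφ) (ihψ hψ)
  | ex x φ ih =>
    rw [sat_ex, hJ, Set.exists_mem_insert, Set.exists_mem_image, or_comm]
    refine or_congr (sat_exActive.trans ?_) ?_
    · simp only [ih hφ, VarRole.extend_update]
      rfl
    · rw [ih hφ, VarRole.extend_update_fresh]
  | all x φ ih =>
    rw [sat_all, hJ, Set.forall_mem_insert, Set.forall_mem_image, and_comm]
    refine and_congr ((not_congr sat_exActive).trans ?_) ?_
    · simp only [Sat, ih hφ, VarRole.extend_update]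
      push Not
      rfl
    · rw [ih hφ, VarRole.extend_update_fresh]

end SInterp

theorem DomIndep.sat_iff_sat_relativize {φ : Formula σ V} (hφ : DomIndep φ) (I : SInterp σ U) :
    I.Sat (fun _ => none) φ ↔
      I.Sat (fun _ => none) (φ.relativize φ.symbols fun _ => .undef) := by
  set D : Set (Option U) := insert none (some '' I.activeDomain φ.symbols)
  have hD : (I.map .some).activeDomain φ.symbols ⊆ D :=
    (I.activeDomain_map .some φ.symbols).trans_subset (Set.subset_insert _ _)
  have hnone : none ∈ D := Set.mem_insert _ _
  have hagree := (I.map .some).agreeOn_restrict hD hnone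
  calc I.Sat (fun _ => none) φ
    _ ↔ (I.map .some).Sat (fun _ => none) φ := (SInterp.sat_map .some I _ φ).symm
    _ ↔ ((I.map .some).restrict hD hnone).Sat (fun _ => none) φ := hφ.sat_congr hagree
    _ ↔ I.Sat (fun _ => none) (φ.relativize φ.symbols fun _ => .undef) :=
      (SInterp.sat_relativize (ρ := fun _ => .undef) rfl (List.Subset.refl _) hagree).symm

theorem Formula.freeVars_relativize_undef (S : List σ.Symbol) (φ : Formula σ V) :
    (φ.relativize S fun _ => .undef).freeVars = ∅ :=
  Finset.eq_empty_of_forall_notMem fun _ hy => by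
    cases eq_kept_of_mem_freeVars_relativize hy

end Relativize

theorem safeRange_iff_domainIndependent_general [DecidableEq V] [Infinite V] :
    (∀ φ : Formula σ V, φ.SafeRange → DomIndep φ) ∧
    (∀ φ : Formula σ V, DomIndep φ →
      ∃ ψ : Formula σ V, ψ.freeVars = ∅ ∧ ψ.SafeRange ∧
        ∀ (U : Type) (I : SInterp σ U),
          (I.Sat (fun _ => none) φ ↔ I.Sat (fun _ => none) ψ)) := by
  refine ⟨fun φ hφ => hφ.domIndep, fun φ hφ => ?_⟩
  have hclosed := φ.freeVars_relativize_undef φ.symbols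
  exact ⟨φ.relativize φ.symbols fun _ => .undef, hclosed,
    .of_closed hclosed (φ.isSome_rr_relativize _ _), fun _ => hφ.sat_iff_sat_relativize⟩

end FOLe

/-- Every safe-range closed FOLe formula is domain independent, and every
domain independent closed FOLe formula is logically equivalent to a
safe-range closed FOLe formula. -/
theorem safeRange_iff_domainIndependent {σ : Signature} :
    (∀ φ : Formula σ ℕ, φ.freeVars = ∅ → φ.SafeRange → DomIndep φ) ∧
    (∀ φ : Formula σ ℕ, φ.freeVars = ∅ → DomIndep φ →
      ∃ ψ : Formula σ ℕ, ψ.freeVars = ∅ ∧ ψ.SafeRange ∧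
        ∀ (U : Type) (I : SInterp σ U),
          (SInterp.Sat I (fun _ => none) φ ↔ SInterp.Sat I (fun _ => none) ψ)) := by
  exact ⟨fun φ _ => safeRange_iff_domainIndependent_general.1 φ,
    fun φ _ => safeRange_iff_domainIndependent_general.2 φ⟩
end

section
/- For every expression ẽ of the standard relational algebra RA over the decomposed relational schema ~R there is an expression e of the relational algebra with null values nRA over R such that, for every database instance I, the evaluation of ẽ over the decomposed representation of I equals the evaluation of e over the null-value representation of I. -/
/-! ## The relational algebra with null values (nRA) -/

/-- Expressions of the relational algebra with null values nRA, over a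
database schema (`Rel`, `ar`) and a set `C` of constants, indexed by their
arity.  Tuples take values in `C ∪ {N}`, encoded as `Option C` with `none`
playing the role of the null value `N`. -/
inductive RA (Rel : Type) (ar : Rel → ℕ) (C : Type) : ℕ → Type where
  | rel : (R : Rel) → RA Rel ar C (ar R)
  | csing : C → RA Rel ar C 1
  | nsing : RA Rel ar C 1
  | selc : {n : ℕ} → Fin n → C → RA Rel ar C n → RA Rel ar C n
  | sel : {n : ℕ} → Fin n → Fin n → RA Rel ar C n → RA Rel ar C n
  | proj : {n k : ℕ} → (Fin k → Fin n) → RA Rel ar C n → RA Rel ar C k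
  | prod : {n m : ℕ} → RA Rel ar C n → RA Rel ar C m → RA Rel ar C (n + m)
  | union : {n : ℕ} → RA Rel ar C n → RA Rel ar C n → RA Rel ar C n
  | diff : {n : ℕ} → RA Rel ar C n → RA Rel ar C n → RA Rel ar C n

/-- A database instance: each `n`-ary relation symbol gets a set of
`n`-tuples over `C ∪ {N}`. -/
def Inst (Rel : Type) (ar : Rel → ℕ) (C : Type) :=
  (R : Rel) → Set (Fin (ar R) → Option C)

/-- Evaluation of nRA expressions.  Both selections succeed only on non-null
values. -/
def RA.eval {Rel : Type} {ar : Rel → ℕ} {C : Type} (I : Inst Rel ar C) :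
    {n : ℕ} → RA Rel ar C n → Set (Fin n → Option C)
  | _, .rel R => I R
  | _, .csing v => {fun _ => some v}
  | _, .nsing => {fun _ => none}
  | _, .selc i v e => {s | s ∈ RA.eval I e ∧ s i = some v}
  | _, .sel i j e => {s | s ∈ RA.eval I e ∧ ∃ d : C, s i = some d ∧ s j = some d}
  | _, .proj p e => {s | ∃ s' ∈ RA.eval I e, ∀ j, s j = s' (p j)}
  | _, .prod e₁ e₂ =>
      {s | ∃ t ∈ RA.eval I e₁, ∃ t' ∈ RA.eval I e₂, s = Fin.append t t'}
  | _, .union e₁ e₂ => RA.eval I e₁ ∪ RA.eval I e₂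
  | _, .diff e₁ e₂ => RA.eval I e₁ \ RA.eval I e₂

/-! ## Standard relational algebra over null-free tuples -/

/-- Expressions of the standard relational algebra RA (no null singleton). -/
inductive SRA (Rel : Type) (ar : Rel → ℕ) (C : Type) : ℕ → Type where
  | rel : (R : Rel) → SRA Rel ar C (ar R)
  | csing : C → SRA Rel ar C 1
  | selc : {n : ℕ} → Fin n → C → SRA Rel ar C n → SRA Rel ar C n
  | sel : {n : ℕ} → Fin n → Fin n → SRA Rel ar C n → SRA Rel ar C n
  | proj : {n k : ℕ} → (Fin k → Fin n) → SRA Rel ar C n → SRA Rel ar C k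
  | prod : {n m : ℕ} → SRA Rel ar C n → SRA Rel ar C m → SRA Rel ar C (n + m)
  | union : {n : ℕ} → SRA Rel ar C n → SRA Rel ar C n → SRA Rel ar C n
  | diff : {n : ℕ} → SRA Rel ar C n → SRA Rel ar C n → SRA Rel ar C n

/-- Standard (null-free) evaluation of RA expressions over an instance
assigning sets of total tuples over `C`. -/
def SRA.eval {Rel : Type} {ar : Rel → ℕ} {C : Type}
    (J : (R : Rel) → Set (Fin (ar R) → C)) :
    {n : ℕ} → SRA Rel ar C n → Set (Fin n → C)
  | _, .rel R => J R
  | _, .csing v => {fun _ => v}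
  | _, .selc i v e => {s | s ∈ SRA.eval J e ∧ s i = v}
  | _, .sel i j e => {s | s ∈ SRA.eval J e ∧ s i = s j}
  | _, .proj p e => {s | ∃ s' ∈ SRA.eval J e, ∀ j, s j = s' (p j)}
  | _, .prod e₁ e₂ =>
      {s | ∃ t ∈ SRA.eval J e₁, ∃ t' ∈ SRA.eval J e₂, s = Fin.append t t'}
  | _, .union e₁ e₂ => SRA.eval J e₁ ∪ SRA.eval J e₂
  | _, .diff e₁ e₂ => SRA.eval J e₁ \ SRA.eval J e₂

/-! ## The decomposed schema and the decomposed representation -/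

/-- Relation symbols of the decomposed schema `~R`: pairs of a relation
symbol `R` and a subset `A` of its positions. -/
def DRel (Rel : Type) (ar : Rel → ℕ) : Type := Σ R : Rel, Finset (Fin (ar R))

/-- Arity of a decomposed relation symbol `~R_A` is `|A|`. -/
def dar (Rel : Type) (ar : Rel → ℕ) : DRel Rel ar → ℕ := fun RA' => RA'.2.card

/-- The decomposed representation of an instance: `~R_A` holds the null-free
restrictions to `A` (in ascending positional order) of those tuples of `R`
whose set of non-null positions is exactly `A`. -/
def decompInst {Rel : Type} {ar : Rel → ℕ} {C : Type} (I : Inst Rel ar C) :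
    (R' : DRel Rel ar) → Set (Fin (dar Rel ar R') → C) :=
  fun R' =>
    { f | ∃ τ ∈ I R'.1, (∀ j, τ j ≠ none ↔ j ∈ R'.2) ∧
        ∀ i, τ ↑(R'.2.orderIsoOfFin rfl i) = some (f i) }

/-!
Null-free tuples embed into tuples over `C ∪ {N}`. Each operator of standard RA commutes with this
embedding, because the nRA selections differ from the standard ones only on null values, which
never arise. So it is enough to express each relation `~R_A` in nRA and to substitute these
expressions for the relation symbols: `~R_A` is obtained by selecting the tuples of `R` whose set of
non-null positions is `A` and projecting them onto `A`.
-/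

section TotalTuples

variable {ι κ C : Type*}

/-- The identification of a null-free tuple with a tuple over `C ∪ {N}` in which `N` does not
occur. -/
def ofTotal (f : ι → C) : ι → Option C := fun i => some (f i)

theorem ofTotal_injective : Function.Injective (ofTotal : (ι → C) → ι → Option C) :=
  (Option.some_injective C).comp_left

theorem ofTotal_append {n m : ℕ} (f : Fin n → C) (g : Fin m → C) :
    ofTotal (Fin.append f g) = Fin.append (ofTotal f) (ofTotal g) := by
  ext1 i
  cases i using Fin.addCases <;> simp only [ofTotal, Fin.append_left, Fin.append_right]

theorem exists_ofTotal_eq {t : ι → Option C} (ht : ∀ i, t i ≠ none) : ∃ f, ofTotal f = t :=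
  ⟨fun i => (t i).get (Option.isSome_iff_ne_none.2 (ht i)), funext fun _ => Option.some_get _⟩

theorem image_ofTotal_sep_eq_const (S : Set (ι → C)) (i : ι) (c : C) :
    ofTotal '' {f ∈ S | f i = c} = {t ∈ ofTotal '' S | t i = some c} := by
  ext t
  constructor
  · rintro ⟨f, ⟨hf, rfl⟩, rfl⟩
    exact ⟨⟨f, hf, rfl⟩, rfl⟩
  · rintro ⟨⟨f, hf, rfl⟩, hc⟩
    exact ⟨f, ⟨hf, Option.some.inj hc⟩, rfl⟩

theorem image_ofTotal_sep_eq (S : Set (ι → C)) (i j : ι) :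
    ofTotal '' {f ∈ S | f i = f j} =
      {t ∈ ofTotal '' S | ∃ c : C, t i = some c ∧ t j = some c} := by
  ext t
  constructor
  · rintro ⟨f, ⟨hf, hij⟩, rfl⟩
    exact ⟨⟨f, hf, rfl⟩, f j, congrArg some hij, rfl⟩
  · rintro ⟨⟨f, hf, rfl⟩, c, hi, hj⟩
    exact ⟨f, ⟨hf, Option.some.inj (hi.trans hj.symm)⟩, rfl⟩

theorem image_ofTotal_reindex (S : Set (ι → C)) (p : κ → ι) :
    ofTotal '' {g | ∃ f ∈ S, ∀ j, g j = f (p j)} =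
      {t | ∃ u ∈ ofTotal '' S, ∀ j, t j = u (p j)} := by
  ext t
  constructor
  · rintro ⟨g, ⟨f, hf, hg⟩, rfl⟩
    exact ⟨ofTotal f, ⟨f, hf, rfl⟩, fun j => congrArg some (hg j)⟩
  · rintro ⟨_, ⟨f, hf, rfl⟩, ht⟩
    exact ⟨f ∘ p, ⟨f, hf, fun _ => rfl⟩, funext fun j => (ht j).symm⟩

theorem image_ofTotal_append {n m : ℕ} (S : Set (Fin n → C)) (T : Set (Fin m → C)) :
    ofTotal '' {h | ∃ f ∈ S, ∃ g ∈ T, h = Fin.append f g} =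
      {t | ∃ u ∈ ofTotal '' S, ∃ v ∈ ofTotal '' T, t = Fin.append u v} := by
  ext t
  constructor
  · rintro ⟨_, ⟨f, hf, g, hg, rfl⟩, rfl⟩
    exact ⟨ofTotal f, ⟨f, hf, rfl⟩, ofTotal g, ⟨g, hg, rfl⟩, ofTotal_append f g⟩
  · rintro ⟨_, ⟨f, hf, rfl⟩, _, ⟨g, hg, rfl⟩, rfl⟩
    exact ⟨Fin.append f g, ⟨f, hf, g, hg, rfl⟩, ofTotal_append f g⟩

end TotalTuples

namespace SRA

variable {Rel Rel' C : Type} {ar : Rel → ℕ} {ar' : Rel' → ℕ} {n : ℕ}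

/-- Composition of queries: the nRA expression obtained from a standard RA expression by
replacing each relation symbol `R` by `σ R` and keeping every operator. -/
def subst (σ : (R : Rel') → RA Rel ar C (ar' R)) {n : ℕ} : SRA Rel' ar' C n → RA Rel ar C n
  | .rel R => σ R
  | .csing c => .csing c
  | .selc i c e => .selc i c (e.subst σ)
  | .sel i j e => .sel i j (e.subst σ)
  | .proj p e => .proj p (e.subst σ)
  | .prod e₁ e₂ => .prod (e₁.subst σ) (e₂.subst σ)
  | .union e₁ e₂ => .union (e₁.subst σ) (e₂.subst σ)
  | .diff e₁ e₂ => .diff (e₁.subst σ) (e₂.subst σ)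

theorem eval_subst {I : Inst Rel ar C} {J : (R : Rel') → Set (Fin (ar' R) → C)}
    {σ : (R : Rel') → RA Rel ar C (ar' R)} (hσ : ∀ R, RA.eval I (σ R) = ofTotal '' J R)
    (e : SRA Rel' ar' C n) : RA.eval I (e.subst σ) = ofTotal '' SRA.eval J e := by
  induction e with
  | rel R => exact hσ R
  | csing c => exact (Set.image_singleton (f := ofTotal) (a := fun _ => c)).symm
  | selc i c e ih => simp only [SRA.eval, subst, RA.eval, image_ofTotal_sep_eq_const, ih]
  | sel i j e ih => simp only [SRA.eval, subst, RA.eval, image_ofTotal_sep_eq, ih]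
  | proj p e ih => simp only [SRA.eval, subst, RA.eval, image_ofTotal_reindex, ih]
  | prod e₁ e₂ ih₁ ih₂ => simp only [SRA.eval, subst, RA.eval, image_ofTotal_append, ih₁, ih₂]
  | union e₁ e₂ ih₁ ih₂ => simp only [SRA.eval, subst, RA.eval, Set.image_union, ih₁, ih₂]
  | diff e₁ e₂ ih₁ ih₂ =>
    simp only [SRA.eval, subst, RA.eval, Set.image_sdiff ofTotal_injective, ih₁, ih₂]

end SRA

namespace RA

variable {Rel C : Type} {ar : Rel → ℕ} {n : ℕ}

/-- The derived selection `σ_{isNotNull(i)}`. -/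
def selNotNull (i : Fin n) (e : RA Rel ar C n) : RA Rel ar C n := .sel i i e

/-- The derived selection `σ_{isNull(i)}`. -/
def selNull (i : Fin n) (e : RA Rel ar C n) : RA Rel ar C n := .diff e (selNotNull i e)

/-- The selection of the tuples whose set of non-null positions is exactly `A`, as the iterated
selections `σ_{isNotNull(i₁)} … σ_{isNotNull(iₖ)} (σ_{isNull(j₁)} … σ_{isNull(jₗ)} e)` over
`A = {i₁ < … < iₖ}` and its complement `{j₁ < … < jₗ}`. -/
def selSupport (A : Finset (Fin n)) (e : RA Rel ar C n) : RA Rel ar C n :=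
  A.sort.foldr selNotNull (Aᶜ.sort.foldr selNull e)

/-- The nRA expression defining the relation `~R_A` of the decomposed schema. -/
def decomp (R : DRel Rel ar) : RA Rel ar C (dar Rel ar R) :=
  .proj (fun i => R.2.orderIsoOfFin rfl i) (selSupport R.2 (.rel R.1))

variable {I : Inst Rel ar C} {e : RA Rel ar C n} {t : Fin n → Option C}

theorem mem_eval_selNotNull {i : Fin n} :
    t ∈ eval I (selNotNull i e) ↔ t ∈ eval I e ∧ t i ≠ none := by
  simp only [selNotNull, eval, Set.mem_ofPred_eq, and_self, Option.ne_none_iff_exists']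

theorem mem_eval_selNull {i : Fin n} :
    t ∈ eval I (selNull i e) ↔ t ∈ eval I e ∧ t i = none := by
  simp only [selNull, eval, Set.mem_sdiff, mem_eval_selNotNull]
  tauto

theorem mem_eval_foldr {ι : Type*} {sel : ι → RA Rel ar C n → RA Rel ar C n} {P : ι → Prop}
    (hsel : ∀ i e, t ∈ eval I (sel i e) ↔ t ∈ eval I e ∧ P i) (l : List ι) :
    t ∈ eval I (l.foldr sel e) ↔ t ∈ eval I e ∧ ∀ i ∈ l, P i := by
  induction l with
  | nil => simp
  | cons i l ih =>
    rw [List.foldr_cons, hsel, ih, List.forall_mem_cons, and_assoc, and_comm (a := P i)]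

theorem mem_eval_selSupport {A : Finset (Fin n)} :
    t ∈ eval I (selSupport A e) ↔ t ∈ eval I e ∧ ∀ i, t i ≠ none ↔ i ∈ A := by
  rw [selSupport, mem_eval_foldr (sel := selNotNull) fun _ _ => mem_eval_selNotNull,
    mem_eval_foldr (sel := selNull) fun _ _ => mem_eval_selNull, and_assoc]
  simp only [Finset.mem_sort, Finset.mem_compl]
  grind

theorem eval_decomp (I : Inst Rel ar C) (R : DRel Rel ar) :
    eval I (decomp R) = ofTotal '' decompInst I R := by
  ext s
  simp only [decomp, eval, mem_eval_selSupport, Set.mem_ofPred_eq]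
  constructor
  · rintro ⟨t, ⟨ht, hA⟩, hs⟩
    have hs_total (i) : s i ≠ none := hs i ▸ (hA _).2 (R.2.orderIsoOfFin rfl i).2
    obtain ⟨f, rfl⟩ := exists_ofTotal_eq hs_total
    exact ⟨f, ⟨t, ht, hA, fun i => (hs i).symm⟩, rfl⟩
  · rintro ⟨f, ⟨t, ht, hA, hf⟩, rfl⟩
    exact ⟨t, ⟨ht, hA⟩, fun i => (hf i).symm⟩

end RA

/-- For every standard relational algebra expression over the decomposed
schema there is an nRA expression over the original schema whose evaluation
over the null-value representation of any instance coincides (via the obvious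
identification of null-free tuples) with the evaluation of the former over
the decomposed representation. -/
theorem decomposed_RA_to_nRA {Rel C : Type} {ar : Rel → ℕ} {n : ℕ}
    (et : SRA (DRel Rel ar) (dar Rel ar) C n) :
    ∃ e : RA Rel ar C n, ∀ I : Inst Rel ar C,
      (fun f : Fin n → C => (fun i => some (f i) : Fin n → Option C)) ''
          SRA.eval (decompInst I) et
        = RA.eval I e :=
  ⟨et.subst RA.decomp, fun I => (et.eval_subst (RA.eval_decomp I)).symm⟩
end
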